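/- arXiv:2201.03695 — 4 statements merged into one kernel-verified Lean document; each statement's English description precedes it below -/
import Mathlib

section
/- Let G be a finite group, P a finite G-poset, K = K(P) its order complex, and x a vertex of K (i.e. an element of P). Then the saturation G·star(x) of the open star of x is a G-categorical subset of |K|: the inclusion G·star(x) ↪ |K| is G-homotopic to a map taking values in the single orbit O(x). -/
/-! ### Module A: equivariant TC / CC / LS for topological G-spaces -/

/-- The zigzag order `0 < 1 > 2 < 3 > ⋯` on natural numbers. -/
def zigzagLE (i j : ℕ) : Prop := i = j ∨ (i % 2 = 0 ∧ (j = i + 1 ∨ i = j + 1))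

/-- The combinatorial interval `J m = {0, 1, …, m}`. -/
def J (m : ℕ) : Type := Fin (m + 1)

namespace J

/-- The underlying natural number of a point of `J m`. -/
def val {m : ℕ} (i : J m) : ℕ := Fin.val i

/-- The initial point `0` of the combinatorial interval. -/
def zero (m : ℕ) : J m := (0 : Fin (m + 1))

/-- The final point `m` of the combinatorial interval. -/
def last (m : ℕ) : J m := Fin.last m

/-- The topology on `J m` whose open sets are the down-closed sets for the zigzag order. -/
instance (m : ℕ) : TopologicalSpace (J m) where
  IsOpen U := ∀ ⦃a⦄, a ∈ U → ∀ ⦃b⦄, zigzagLE (J.val b) (J.val a) → b ∈ U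
  isOpen_univ := fun a _ b _ => Set.mem_univ b
  isOpen_inter := fun s t hs ht a ha b hba => ⟨hs ha.1 hba, ht ha.2 hba⟩
  isOpen_sUnion := fun S hS a ha b hba => by
    obtain ⟨t, htS, hat⟩ := ha
    exact ⟨t, htS, hS t htS hat hba⟩

end J

section Equivariant

variable (G : Type*) [Group G]

/-- A set is `G`-invariant if it is stable under the action of every group element. -/
def GInvariant {α : Type*} [SMul G α] (U : Set α) : Prop :=
  ∀ g : G, ∀ x ∈ U, g • x ∈ U

variable (X : Type*) [TopologicalSpace X] [MulAction G X]

/-- `U ⊆ X × X` admits a continuous equivariant section of the free path fibration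
`π : X^I → X × X`, `α ↦ (α 0, α 1)`. -/
def EqNavigable (U : Set (X × X)) : Prop :=
  ∃ s : U → C(unitInterval, X), Continuous s ∧
    (∀ u : U, s u 0 = (u : X × X).1 ∧ s u 1 = (u : X × X).2) ∧
    (∀ (g : G) (u : U) (h : g • (u : X × X) ∈ U) (t : unitInterval),
      s ⟨g • (u : X × X), h⟩ t = g • s u t)

/-- The equivariant topological complexity: the least `k` such that `X × X` admits a cover by
`k` open invariant sets, each admitting a continuous equivariant section of the free path
fibration; `⊤` if there is no such cover. -/
noncomputable def eqTC : ℕ∞ :=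
  sInf {k : ℕ∞ | ∃ n : ℕ, k = n ∧ ∃ U : Fin n → Set (X × X),
    (∀ i, IsOpen (U i)) ∧ (∀ i, GInvariant G (U i)) ∧ (⋃ i, U i) = Set.univ ∧
    ∀ i, EqNavigable G X (U i)}

/-- `U ⊆ X × X` admits a continuous equivariant section of the combinatorial path fibration
`q_m : X^{J_m} → X × X`, `β ↦ (β 0, β m)`. -/
def EqNavigableJ (m : ℕ) (U : Set (X × X)) : Prop :=
  ∃ s : U → C(J m, X), Continuous s ∧
    (∀ u : U, s u (J.zero m) = (u : X × X).1 ∧ s u (J.last m) = (u : X × X).2) ∧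
    (∀ (g : G) (u : U) (h : g • (u : X × X) ∈ U) (t : J m),
      s ⟨g • (u : X × X), h⟩ t = g • s u t)

/-- The equivariant combinatorial complexity with paths of length `m`: the least `k` such that
`X × X` admits a cover by `k` open invariant sets, each admitting a continuous equivariant
section of the combinatorial path fibration `q_m`; `⊤` if there is no such cover. -/
noncomputable def eqCCm (m : ℕ) : ℕ∞ :=
  sInf {k : ℕ∞ | ∃ n : ℕ, k = n ∧ ∃ U : Fin n → Set (X × X),
    (∀ i, IsOpen (U i)) ∧ (∀ i, GInvariant G (U i)) ∧ (⋃ i, U i) = Set.univ ∧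
    ∀ i, EqNavigableJ G X m (U i)}

/-- The equivariant combinatorial complexity: the minimum over all `m ≥ 1` of `eqCCm`. -/
noncomputable def eqCC : ℕ∞ := ⨅ m : ℕ, eqCCm G X (m + 1)

/-- `U ⊆ X` is `G`-categorical for the orbit of `x₀`: the inclusion of `U` into `X` is
`G`-homotopic to a map taking values in the orbit of `x₀`. -/
def GCategoricalAt (U : Set X) (x₀ : X) : Prop :=
  ∃ F : U × unitInterval → X, Continuous F ∧
    (∀ u : U, F (u, 0) = (u : X)) ∧
    (∀ (g : G) (u : U) (h : g • (u : X) ∈ U) (t : unitInterval),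
      F (⟨g • (u : X), h⟩, t) = g • F (u, t)) ∧
    (∀ u : U, F (u, 1) ∈ MulAction.orbit G x₀)

/-- `U ⊆ X` is `G`-categorical: the inclusion of `U` into `X` is `G`-homotopic to a map taking
values in a single orbit. -/
def GCategorical (U : Set X) : Prop :=
  ∃ x₀ : X, GCategoricalAt G X U x₀

/-- The equivariant Lusternik–Schnirelmann category: the least `k` such that `X` is covered by
`k` open invariant `G`-categorical sets; `⊤` if there is no such cover. -/
noncomputable def eqLS : ℕ∞ :=
  sInf {k : ℕ∞ | ∃ n : ℕ, k = n ∧ ∃ U : Fin n → Set X,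
    (∀ i, IsOpen (U i)) ∧ (∀ i, GInvariant G (U i)) ∧ (⋃ i, U i) = Set.univ ∧
    ∀ i, GCategorical G X (U i)}

end Equivariant
/-! ### Module C: ordered G-simplicial complexes and their geometric realizations -/

/-- An ordered `G`-simplicial complex: a finite abstract simplicial complex whose vertex set
carries a partial order in which every simplex is totally ordered, together with an action of
`G` on the vertices by monotone simplicial maps. -/
structure GOSC (G : Type) [Group G] : Type 1 where
  /-- the vertex set -/
  V : Type
  [fin : Fintype V]
  [dec : DecidableEq V]
  [po : PartialOrder V]
  /-- the set of simplices -/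
  faces : Set (Finset V)
  singleton_mem : ∀ v : V, {v} ∈ faces
  nonempty_of_mem : ∀ s ∈ faces, s.Nonempty
  down_closed : ∀ s ∈ faces, ∀ t ⊆ s, t.Nonempty → t ∈ faces
  face_chain : ∀ s ∈ faces, ∀ x ∈ s, ∀ y ∈ s, x ≤ y ∨ y ≤ x
  /-- the action of `G` on vertices -/
  smul : G → V → V
  smul_one : ∀ v, smul 1 v = v
  smul_mul : ∀ g h v, smul (g * h) v = smul g (smul h v)
  smul_mono : ∀ g : G, ∀ x y : V, x ≤ y → smul g x ≤ smul g y
  smul_faces : ∀ g : G, ∀ s ∈ faces, s.image (smul g) ∈ faces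

attribute [instance] GOSC.fin GOSC.dec GOSC.po

namespace GOSC

variable {G : Type} [Group G]

/-- The underlying set of the geometric realization `|K|`: formal convex combinations of
vertices whose support is a simplex of `K`. -/
def realSet (K : GOSC G) : Set (K.V → ℝ) :=
  {f | (∀ v, 0 ≤ f v) ∧ (∑ v, f v) = 1 ∧ ∃ s ∈ K.faces, ∀ v, f v ≠ 0 → v ∈ s}

/-- The geometric realization `|K|` of an ordered `G`-simplicial complex, topologized as a
subspace of Euclidean space `K.V → ℝ`. -/
def Real (K : GOSC G) : Type := {f : K.V → ℝ // f ∈ K.realSet}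

instance (K : GOSC G) : TopologicalSpace K.Real :=
  inferInstanceAs (TopologicalSpace {f : K.V → ℝ // f ∈ K.realSet})

/-- Each `g : G` acts on `K.V` by an order isomorphism. -/
def permOf (K : GOSC G) (g : G) : Equiv K.V K.V where
  toFun := K.smul g
  invFun := K.smul g⁻¹
  left_inv := fun v => by
    rw [← K.smul_mul, inv_mul_cancel, K.smul_one]
  right_inv := fun v => by
    rw [← K.smul_mul, mul_inv_cancel, K.smul_one]

/-- The action of `G` on the geometric realization, by affine extension:
`(g • f) v = f (g⁻¹ • v)`. -/
instance (K : GOSC G) : SMul G K.Real where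
  smul g f := ⟨fun v => f.val (K.smul g⁻¹ v), by
    obtain ⟨hnn, hsum, s, hs, hsupp⟩ := f.prop
    refine ⟨fun v => hnn _, ?_, s.image (K.smul g), K.smul_faces g s hs, ?_⟩
    · rw [show (∑ v, f.val (K.smul g⁻¹ v)) = ∑ v, f.val (K.permOf g⁻¹ v) from rfl,
        Equiv.sum_comp (K.permOf g⁻¹) f.val]
      exact hsum
    · intro v hv
      have : K.smul g⁻¹ v ∈ s := hsupp _ hv
      refine Finset.mem_image.mpr ⟨K.smul g⁻¹ v, this, ?_⟩
      rw [← K.smul_mul, mul_inv_cancel, K.smul_one]⟩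

lemma smul_apply (K : GOSC G) (g : G) (f : K.Real) (v : K.V) :
    (g • f).val v = f.val (K.smul g⁻¹ v) := rfl

instance (K : GOSC G) : MulAction G K.Real where
  one_smul f := by
    apply Subtype.ext
    funext v
    rw [smul_apply, inv_one, K.smul_one]
  mul_smul g h f := by
    apply Subtype.ext
    funext v
    rw [smul_apply, smul_apply, smul_apply, mul_inv_rev, K.smul_mul]

end GOSC
/-! ### Order complexes of finite G-posets -/

/-- The order complex `K(P)` of a finite `G`-poset `P` (a finite poset with `G` acting by
order-preserving maps): the ordered `G`-simplicial complex whose vertices are the elements of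
`P` and whose simplices are the nonempty totally ordered subsets (chains) of `P`. -/
noncomputable def orderComplexG (G : Type) [Group G] (P : Type) [Fintype P] [PartialOrder P]
    [MulAction G P] (hmono : ∀ g : G, Monotone (fun p : P => g • p)) : GOSC G :=
  letI : DecidableEq P := Classical.decEq P
  { V := P
    faces := {s | s.Nonempty ∧ ∀ x ∈ s, ∀ y ∈ s, x ≤ y ∨ y ≤ x}
    singleton_mem := fun v => ⟨Finset.singleton_nonempty v, by
      intro x hx y hy
      rw [Finset.mem_singleton] at hx hy
      subst hx; subst hy; exact Or.inl le_rfl⟩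
    nonempty_of_mem := fun s hs => hs.1
    down_closed := fun s hs t hts htne => ⟨htne, fun x hx y hy => hs.2 x (hts hx) y (hts hy)⟩
    face_chain := fun s hs => hs.2
    smul := fun g p => g • p
    smul_one := fun p => one_smul G p
    smul_mul := fun g h p => mul_smul g h p
    smul_mono := fun g x y hxy => hmono g hxy
    smul_faces := fun g s hs => ⟨hs.1.image _, by
      intro x hx y hy
      rcases Finset.mem_image.mp hx with ⟨a, ha, rfl⟩
      rcases Finset.mem_image.mp hy with ⟨b, hb, rfl⟩
      rcases hs.2 a ha b hb with h | h
      · exact Or.inl (hmono g h)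
      · exact Or.inr (hmono g h)⟩ }

namespace GOSC

variable {G : Type} [Group G]

/-- The vertex `x`, as a point of the geometric realization. -/
noncomputable def vertexPoint (K : GOSC G) (x : K.V) : K.Real :=
  ⟨fun v => if v = x then 1 else 0, by
    refine ⟨fun v => by positivity, by simp, {x}, K.singleton_mem x, ?_⟩
    intro v hv
    rw [Finset.mem_singleton]
    by_contra h
    exact hv (if_neg h)⟩

/-- The open star of a vertex `x` in `|K|`: the union of the open simplices `σ°` over all
simplices `σ` containing `x`; equivalently, the set of points whose barycentric coordinate
at `x` is nonzero. -/
def star (K : GOSC G) (x : K.V) : Set K.Real :=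
  {f | f.val x ≠ 0}

/-- The saturation `G · star(x)` of the open star of a vertex. -/
def gStar (K : GOSC G) (x : K.V) : Set K.Real :=
  {h | ∃ g : G, ∃ f ∈ K.star x, h = g • f}

/-- The geometric realization `|K|` is `G`-connected: for every subgroup `H ≤ G`, the
fixed-point set `|K|^H` is path-connected. -/
def RealGConnected (K : GOSC G) : Prop :=
  ∀ H : Subgroup G, ∀ a ∈ {y : K.Real | ∀ h ∈ H, h • y = y},
    ∀ b ∈ {y : K.Real | ∀ h ∈ H, h • y = y},
      JoinedIn {y : K.Real | ∀ h ∈ H, h • y = y} a b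

end GOSC

/-- A zigzag of order relations between `x` and `y` staying inside the set `S`. -/
def ZigzagIn {P : Type*} [PartialOrder P] (S : Set P) (x y : P) : Prop :=
  Relation.ReflTransGen (fun a b => a ∈ S ∧ b ∈ S ∧ (a ≤ b ∨ b ≤ a)) x y

/-- A finite `G`-poset `P` is `G`-connected: for every subgroup `H ≤ G`, the fixed-point set
`P^H` is order-connected (any two of its points are joined by a zigzag of order relations in
`P^H`; equivalently, `P^H` with its down-set topology is path-connected). -/
def PosetGConnected (G P : Type*) [Group G] [PartialOrder P] [MulAction G P] : Prop :=
  ∀ H : Subgroup G, ∀ x ∈ {p : P | ∀ h ∈ H, h • p = p}, ∀ y ∈ {p : P | ∀ h ∈ H, h • p = p},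
    ZigzagIn {p : P | ∀ h ∈ H, h • p = p} x y

/-!
A group of monotone bijections of a finite poset cannot move a point strictly up or down, so every
orbit of vertices is an antichain and meets each simplex, being a chain, in at most one vertex.
Deleting the barycentric coordinates outside the orbit of `x` and rescaling therefore sends each
point of `G·star(x)` to a vertex in that orbit. This projection is continuous and equivariant, and
the segment from a point to its image stays inside the simplex carrying the point.
-/

section Antichain

variable {G α : Type*} [Group G] [PartialOrder α] [WellFoundedLT α] [MulAction G α]

lemma not_smul_lt_self (hmono : ∀ g : G, Monotone fun a : α => g • a) (g : G) (a : α) :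
    ¬ g • a < a := fun hlt =>
  have hstrict : StrictMono fun b : α => g • b :=
    (hmono g).strictMono_of_injective (MulAction.injective g)
  not_strictAnti_of_wellFoundedLT _ (hstrict.strictAnti_iterate_of_map_lt hlt)

lemma isAntichain_orbit (hmono : ∀ g : G, Monotone fun a : α => g • a) (a : α) :
    IsAntichain (· ≤ ·) (MulAction.orbit G a) := by
  rintro _ ⟨g, rfl⟩ _ ⟨h, rfl⟩ hne hle
  refine not_smul_lt_self hmono (g * h⁻¹) (h • a) ?_
  rw [smul_smul, inv_mul_cancel_right]
  exact lt_of_le_of_ne hle hne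

end Antichain

namespace GOSC

open Function MulAction
open scoped Pointwise

variable {G : Type} [Group G] {K : GOSC G}

instance : MulAction G K.V where
  smul := K.smul
  one_smul := K.smul_one
  mul_smul := K.smul_mul

/-- A point of `|K|`, viewed as the function giving its barycentric coordinates. -/
instance : FunLike K.Real K.V ℝ where
  coe a := a.val
  coe_injective := Subtype.val_injective

section Coordinates

lemma coe_mem_realSet (a : K.Real) : ⇑a ∈ K.realSet := a.prop

lemma coe_nonneg (a : K.Real) : 0 ≤ ⇑a := (coe_mem_realSet a).1

lemma sum_coe (a : K.Real) : ∑ v, a v = 1 := (coe_mem_realSet a).2.1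

lemma exists_face_support_subset (a : K.Real) :
    ∃ s ∈ K.faces, support a ⊆ (s : Set K.V) := (coe_mem_realSet a).2.2

lemma smul_coe_apply (g : G) (a : K.Real) (v : K.V) : (g • a) v = a (g⁻¹ • v) := rfl

lemma isInducing_coe : Topology.IsInducing (DFunLike.coe : K.Real → K.V → ℝ) :=
  Topology.IsInducing.subtypeVal

lemma support_nonempty (a : K.Real) : (support a).Nonempty := by
  by_contra! h
  simpa [support_eq_empty_iff.mp h] using sum_coe a

lemma isChain_of_mem_faces {s : Finset K.V} (hs : s ∈ K.faces) :
    IsChain (· ≤ ·) (s : Set K.V) := fun v hv w hw _ => K.face_chain s hs v hv w hw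

end Coordinates

section VertexPoint

lemma coe_vertexPoint (x : K.V) : ⇑(K.vertexPoint x) = Pi.single x 1 :=
  funext fun v => (Pi.single_apply x (1 : ℝ) v).symm

lemma smul_vertexPoint (g : G) (x : K.V) : g • K.vertexPoint x = K.vertexPoint (g • x) :=
  DFunLike.ext _ _ fun v => by
    simp only [smul_coe_apply, coe_vertexPoint, Pi.single_apply, inv_smul_eq_iff]

lemma eq_vertexPoint_of_support_subset {a : K.Real} {x : K.V} (h : support a ⊆ {x}) :
    a = K.vertexPoint x := by
  have hzero (v : K.V) (hv : v ≠ x) : a v = 0 := notMem_support.mp fun hav => hv (h hav)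
  have hone : a x = 1 := by rw [← sum_coe a, Fintype.sum_eq_single x hzero]
  refine DFunLike.ext _ _ fun v => ?_
  rw [coe_vertexPoint]
  rcases eq_or_ne v x with rfl | hv
  · rw [hone, Pi.single_eq_same]
  · rw [hzero v hv, Pi.single_eq_of_ne hv]

lemma mem_orbit_vertexPoint_of_support_subset {a : K.Real} {x : K.V}
    (h : support a ⊆ orbit G x) : a ∈ orbit G (K.vertexPoint x) := by
  obtain ⟨s, hs, has⟩ := exists_face_support_subset a
  have hsub : (support a).Subsingleton :=
    subsingleton_of_isChain_of_isAntichain ((isChain_of_mem_faces hs).mono has)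
      ((isAntichain_orbit K.smul_mono x).subset h)
  obtain ⟨v, hv⟩ := support_nonempty a
  obtain ⟨g, rfl⟩ := h hv
  have ha : a = K.vertexPoint (g • x) :=
    eq_vertexPoint_of_support_subset fun w hw => hsub hw hv
  exact ⟨g, (smul_vertexPoint g x).trans ha.symm⟩

end VertexPoint

section StraightLine

lemma lineMap_mem_realSet {a b : K.V → ℝ} (ha : a ∈ K.realSet) (hb : b ∈ K.realSet)
    {s : Finset K.V} (hs : s ∈ K.faces) (has : support a ⊆ s) (hbs : support b ⊆ s)
    (t : unitInterval) : AffineMap.lineMap a b (t : ℝ) ∈ K.realSet := by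
  obtain ⟨hnonneg, hsum⟩ : AffineMap.lineMap a b (t : ℝ) ∈ stdSimplex ℝ K.V :=
    (convex_stdSimplex ℝ K.V).lineMap_mem ⟨ha.1, ha.2.1⟩ ⟨hb.1, hb.2.1⟩ t.prop
  refine ⟨hnonneg, hsum, s, hs, fun v hv => ?_⟩
  by_contra hvs
  have hav : a v = 0 := notMem_support.mp fun h => hvs (has h)
  have hbv : b v = 0 := notMem_support.mp fun h => hvs (hbs h)
  simp [AffineMap.lineMap_apply, hav, hbv] at hv

theorem gCategoricalAt_of_contiguous {U : Set K.Real} {x₀ : K.Real} {r : U → K.Real}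
    (hr : Continuous r)
    (hcontig : ∀ u : U, ∃ s ∈ K.faces,
      support u.val ⊆ (s : Set K.V) ∧ support (r u) ⊆ (s : Set K.V))
    (hequiv : ∀ (g : G) (u : U) (h : g • u.val ∈ U), r ⟨g • u.val, h⟩ = g • r u)
    (horbit : ∀ u, r u ∈ orbit G x₀) : GCategoricalAt G K.Real U x₀ := by
  have hmem (p : U × unitInterval) :
      AffineMap.lineMap ⇑p.1.val ⇑(r p.1) (p.2 : ℝ) ∈ K.realSet :=
    let ⟨_, hs, hus, hrs⟩ := hcontig p.1
    lineMap_mem_realSet (coe_mem_realSet _) (coe_mem_realSet _) hs hus hrs p.2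
  let F (p : U × unitInterval) : K.Real := ⟨_, hmem p⟩
  have hF (p) : ⇑(F p) = AffineMap.lineMap ⇑p.1.val ⇑(r p.1) (p.2 : ℝ) := rfl
  refine ⟨F, isInducing_coe.continuous_iff.mpr ?_, fun u => ?_, fun g u h t => ?_, fun u => ?_⟩
  · have hcoe := isInducing_coe (K := K).continuous
    exact Continuous.lineMap (hcoe.comp (continuous_subtype_val.comp continuous_fst))
      (hcoe.comp (hr.comp continuous_fst)) (continuous_subtype_val.comp continuous_snd)
  · refine DFunLike.coe_injective ?_
    rw [hF, Set.Icc.coe_zero, AffineMap.lineMap_apply_zero]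
  · refine DFunLike.ext _ _ fun v => ?_
    simp only [smul_coe_apply, hF, hequiv, AffineMap.pi_lineMap_apply]
  · have hend : F (u, 1) = r u := DFunLike.coe_injective <| by
      rw [hF, Set.Icc.coe_one, AffineMap.lineMap_apply_one]
    exact hend ▸ horbit u

end StraightLine

section NormalizedRestriction

variable {S : Set K.V}

/-- The total weight that the barycentric coordinates of `a` give to the vertices in `S`. -/
noncomputable def mass (S : Set K.V) (a : K.Real) : ℝ := ∑ v, S.indicator a v

lemma indicator_coe_nonneg (a : K.Real) : 0 ≤ S.indicator a :=
  Set.indicator_nonneg fun v _ => coe_nonneg a v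

lemma mass_nonneg (a : K.Real) : 0 ≤ mass S a :=
  Fintype.sum_nonneg (indicator_coe_nonneg a)

lemma mass_ne_zero_iff {a : K.Real} : mass S a ≠ 0 ↔ ∃ v ∈ S, a v ≠ 0 := by
  simp [mass, Fintype.sum_eq_zero_iff_of_nonneg (indicator_coe_nonneg a), funext_iff]

lemma indicator_smul_coe (hS : ∀ g : G, g • S = S) (g : G) (a : K.Real) (v : K.V) :
    S.indicator (g • a) v = S.indicator a (g⁻¹ • v) := by
  have hmem : g⁻¹ • v ∈ S ↔ v ∈ S := by rw [← Set.mem_smul_set_iff_inv_smul_mem, hS]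
  classical
  simp only [Set.indicator_apply, hmem, smul_coe_apply]

lemma mass_smul (hS : ∀ g : G, g • S = S) (g : G) (a : K.Real) : mass S (g • a) = mass S a := by
  simp only [mass, indicator_smul_coe hS]
  exact Equiv.sum_comp (MulAction.toPerm g⁻¹) (S.indicator a)

lemma continuous_indicator_coe (S : Set K.V) :
    Continuous fun a : K.Real => S.indicator a := by
  refine continuous_pi fun v => ?_
  by_cases hv : v ∈ S
  · simp only [Set.indicator_of_mem hv]
    exact (continuous_apply v).comp isInducing_coe.continuous
  · simp only [Set.indicator_of_notMem hv]
    exact continuous_const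

lemma continuous_mass (S : Set K.V) : Continuous (mass S) :=
  continuous_finsetSum _ fun v _ => (continuous_apply v).comp (continuous_indicator_coe S)

/-- The projection of the points of positive mass on `S` onto the full subcomplex spanned by `S`:
delete the coordinates outside `S` and rescale. -/
noncomputable def normalizedRestriction (S : Set K.V) (a : {a : K.Real // mass S a ≠ 0}) :
    K.Real :=
  ⟨(mass S a.val)⁻¹ • S.indicator a.val, by
    obtain ⟨s, hs, has⟩ := exists_face_support_subset a.val
    refine ⟨smul_nonneg (inv_nonneg.mpr (mass_nonneg a.val)) (indicator_coe_nonneg a.val), ?_,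
      s, hs, fun v hv => has fun hav => hv ?_⟩
    · simp only [Pi.smul_apply, ← Finset.smul_sum]
      exact inv_mul_cancel₀ a.prop
    · simp [hav]⟩

lemma coe_normalizedRestriction (a : {a : K.Real // mass S a ≠ 0}) :
    ⇑(normalizedRestriction S a) = (mass S a.val)⁻¹ • S.indicator a.val := rfl

lemma continuous_normalizedRestriction (S : Set K.V) : Continuous (normalizedRestriction S) :=
  isInducing_coe.continuous_iff.mpr <|
    (((continuous_mass S).comp continuous_subtype_val).inv₀ Subtype.prop).smul
      ((continuous_indicator_coe S).comp continuous_subtype_val)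

lemma support_normalizedRestriction (a : {a : K.Real // mass S a ≠ 0}) :
    support (normalizedRestriction S a) = S ∩ support a.val := by
  rw [coe_normalizedRestriction, support_const_smul_of_ne_zero _ _ (inv_ne_zero a.prop),
    Set.support_indicator]

lemma normalizedRestriction_smul (hS : ∀ g : G, g • S = S) (g : G)
    (a : {a : K.Real // mass S a ≠ 0}) (h : mass S (g • a.val) ≠ 0) :
    normalizedRestriction S ⟨g • a.val, h⟩ = g • normalizedRestriction S a :=
  DFunLike.ext _ _ fun v => by
    simp only [coe_normalizedRestriction, smul_coe_apply, Pi.smul_apply, mass_smul hS,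
      indicator_smul_coe hS]

end NormalizedRestriction

lemma mem_gStar_iff {x : K.V} {a : K.Real} : a ∈ K.gStar x ↔ ∃ v ∈ orbit G x, a v ≠ 0 := by
  constructor
  · rintro ⟨g, b, hb, rfl⟩
    exact ⟨g • x, mem_orbit x g, by rwa [smul_coe_apply, inv_smul_smul]⟩
  · rintro ⟨_, ⟨g, rfl⟩, ha⟩
    refine ⟨g, g⁻¹ • a, ?_, (smul_inv_smul g a).symm⟩
    change (g⁻¹ • a) x ≠ 0
    rwa [smul_coe_apply, inv_inv]

lemma gStar_eq_setOf_mass_ne_zero (x : K.V) :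
    K.gStar x = {a | mass (orbit G x) a ≠ 0} :=
  Set.ext fun _ => mem_gStar_iff.trans mass_ne_zero_iff.symm

end GOSC

theorem gStar_gCategorical_general {G : Type} [Group G] (K : GOSC G) (x : K.V) :
    GInvariant G (K.gStar x) ∧ GCategoricalAt G K.Real (K.gStar x) (K.vertexPoint x) := by
  have hS := fun g : G => MulAction.smul_orbit g x
  rw [GOSC.gStar_eq_setOf_mass_ne_zero]
  refine ⟨fun g a ha => (GOSC.mass_smul hS g a).trans_ne ha, GOSC.gCategoricalAt_of_contiguous
    (GOSC.continuous_normalizedRestriction _) (fun a => ?_)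
    (GOSC.normalizedRestriction_smul hS) fun a => ?_⟩
  · obtain ⟨s, hs, has⟩ := GOSC.exists_face_support_subset a.val
    refine ⟨s, hs, has, ?_⟩
    rw [GOSC.support_normalizedRestriction]
    exact Set.inter_subset_right.trans has
  · refine GOSC.mem_orbit_vertexPoint_of_support_subset ?_
    rw [GOSC.support_normalizedRestriction]
    exact Set.inter_subset_left

/-- Let `G` be a finite group, `P` a finite `G`-poset, `K = K(P)` its order
complex, and `x` a vertex of `K` (i.e. an element of `P`). Then the saturation `G·star(x)` of
the open star of `x` is a `G`-categorical subset of `|K|`: it is invariant and its inclusion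
into `|K|` is `G`-homotopic to a map taking values in the single orbit `O(x)`. -/
theorem gStar_gCategorical (G P : Type) [Group G] [Finite G]
    [Fintype P] [PartialOrder P] [MulAction G P]
    (hmono : ∀ g : G, Monotone (fun p : P => g • p))
    (x : (orderComplexG G P hmono).V) :
    GInvariant G ((orderComplexG G P hmono).gStar x) ∧
      GCategoricalAt G (orderComplexG G P hmono).Real ((orderComplexG G P hmono).gStar x)
        ((orderComplexG G P hmono).vertexPoint x) :=
  gStar_gCategorical_general (orderComplexG G P hmono) x
end

section
/- Let G be a finite group and K an ordered G-simplicial complex. Then the fixed-point set of the geometric realization equals the realization of the fixed subcomplex: |K|^G = |K^G|. -/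
/-!
A point of `|K|` fixed by `g` has a `g`-invariant carrier. For a vertex `v` of the carrier, `v` and
`g v` then lie in a common simplex and so are comparable; if, say, `v ≤ g v`, monotonicity yields a
chain `v ≤ g v ≤ g² v ≤ ⋯`, which returns to `v` because there are only finitely many vertices.
Hence `g v = v`, so the carrier is a simplex of `K^G`.
-/

open Function in
theorem isFixedPt_of_monotone_of_mem_periodicPts {α : Type*} [PartialOrder α] {f : α → α} {x : α}
    (hf : Monotone f) (hx : x ∈ periodicPts f) (hcomp : x ≤ f x ∨ f x ≤ x) : IsFixedPt f x := by
  obtain ⟨n, hn, hper⟩ := hx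
  rcases hcomp with hle | hge
  · have hreturn : f x ≤ f^[n] x := hf.monotone_iterate_of_le_map hle (Nat.one_le_of_lt hn)
    exact le_antisymm (hreturn.trans_eq hper) hle
  · have hreturn : f^[n] x ≤ f x := hf.antitone_iterate_of_map_le hge (Nat.one_le_of_lt hn)
    exact le_antisymm hge (hper.symm.trans_le hreturn)

namespace GOSC

variable {G : Type} [Group G] {K : GOSC G}

theorem vertex_smul_eq_self_of_le_or_le {g : G} {v : K.V} (h : v ≤ K.smul g v ∨ K.smul g v ≤ v) :
    K.smul g v = v :=
  isFixedPt_of_monotone_of_mem_periodicPts (K.smul_mono g)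
    ((K.permOf g).injective.mem_periodicPts v) h

theorem vertex_inv_smul_eq_self_iff {g : G} {v : K.V} : K.smul g⁻¹ v = v ↔ K.smul g v = v :=
  (K.permOf g).symm_apply_eq.trans eq_comm

/-- The carrier of a point of `|K|`: the simplex spanned by the vertices with non-zero barycentric
coordinate, i.e. the smallest simplex containing the point. -/
noncomputable def carrier (f : K.Real) : Finset K.V := {v | f.val v ≠ 0}

theorem mem_carrier {f : K.Real} {v : K.V} : v ∈ carrier f ↔ f.val v ≠ 0 := by
  simp only [carrier, Finset.mem_filter_univ]

theorem carrier_nonempty (f : K.Real) : (carrier f).Nonempty := by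
  obtain ⟨-, hsum, -⟩ := f.prop
  obtain ⟨v, -, hv⟩ := Finset.exists_ne_zero_of_sum_ne_zero (hsum.trans_ne one_ne_zero)
  exact ⟨v, mem_carrier.mpr hv⟩

theorem carrier_mem_faces (f : K.Real) : carrier f ∈ K.faces := by
  obtain ⟨-, -, s, hs, hsupp⟩ := f.prop
  exact K.down_closed s hs _ (fun v hv => hsupp v (mem_carrier.mp hv)) (carrier_nonempty f)

theorem exists_face_iff_forall_mem_carrier {P : K.V → Prop} {f : K.Real} :
    (∃ s ∈ K.faces, (∀ v ∈ s, P v) ∧ ∀ v, f.val v ≠ 0 → v ∈ s) ↔ ∀ v ∈ carrier f, P v := by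
  constructor
  · rintro ⟨s, -, hP, hsupp⟩ v hv
    exact hP v (hsupp v (mem_carrier.mp hv))
  · exact fun hP => ⟨carrier f, carrier_mem_faces f, hP, fun _ => mem_carrier.mpr⟩

theorem vertex_smul_mem_carrier_smul (g : G) {f : K.Real} {v : K.V} (hv : v ∈ carrier f) :
    K.smul g v ∈ carrier (g • f) := by
  have hcoord : (g • f).val (K.smul g v) = f.val v := congrArg f.val ((K.permOf g).left_inv v)
  exact mem_carrier.mpr (hcoord.trans_ne (mem_carrier.mp hv))

theorem vertex_smul_eq_self_of_mem_carrier {g : G} {f : K.Real} (hf : g • f = f) {v : K.V}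
    (hv : v ∈ carrier f) : K.smul g v = v := by
  have hgv : K.smul g v ∈ carrier f := hf ▸ vertex_smul_mem_carrier_smul g hv
  exact vertex_smul_eq_self_of_le_or_le (K.face_chain _ (carrier_mem_faces f) v hv _ hgv)

theorem smul_eq_self_of_forall_mem_carrier {g : G} {f : K.Real}
    (h : ∀ v ∈ carrier f, K.smul g v = v) : g • f = f := by
  refine Subtype.ext (funext fun v => ?_)
  rw [smul_apply]
  by_cases hfix : K.smul g⁻¹ v = v
  · rw [hfix]
  · have hv : v ∉ carrier f := fun hv => hfix (vertex_inv_smul_eq_self_iff.mpr (h v hv))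
    have hgv : K.smul g⁻¹ v ∉ carrier f := fun hgv =>
      hfix ((h _ hgv).symm.trans ((K.permOf g).right_inv v))
    rw [mem_carrier, not_not] at hv hgv
    rw [hv, hgv]

theorem smul_eq_self_iff_forall_mem_carrier {g : G} {f : K.Real} :
    g • f = f ↔ ∀ v ∈ carrier f, K.smul g v = v :=
  ⟨fun hf _ => vertex_smul_eq_self_of_mem_carrier hf, smul_eq_self_of_forall_mem_carrier⟩

end GOSC

theorem real_fixedPoints_general (G : Type) [Group G] (K : GOSC G) :
    {f : K.Real | ∀ g : G, g • f = f} =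
      {f : K.Real | ∃ s ∈ K.faces, (∀ v ∈ s, ∀ g : G, K.smul g v = v) ∧
        ∀ v, f.val v ≠ 0 → v ∈ s} := by
  ext f
  calc (∀ g : G, g • f = f)
      ↔ ∀ g : G, ∀ v ∈ GOSC.carrier f, K.smul g v = v :=
        forall_congr' fun _ => GOSC.smul_eq_self_iff_forall_mem_carrier
    _ ↔ ∀ v ∈ GOSC.carrier f, ∀ g : G, K.smul g v = v :=
        ⟨fun h v hv g => h g v hv, fun h g v hv => h v hv g⟩
    _ ↔ _ := GOSC.exists_face_iff_forall_mem_carrier.symm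

/-- Let `G` be a finite group and `K` an ordered `G`-simplicial complex.
Then the fixed-point set of the geometric realization equals the (canonically embedded)
realization of the fixed subcomplex `K^G`, i.e. the set of points of `|K|` supported on a
simplex all of whose vertices are fixed by every element of `G`: `|K|^G = |K^G|`. -/
theorem real_fixedPoints (G : Type) [Group G] [Finite G] (K : GOSC G) :
    {f : K.Real | ∀ g : G, g • f = f} =
      {f : K.Real | ∃ s ∈ K.faces, (∀ v ∈ s, ∀ g : G, K.smul g v = v) ∧
        ∀ v, f.val v ≠ 0 → v ∈ s} :=
  real_fixedPoints_general G K
end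

section
/- Let G be a finite group and X a finite T0 G-space. Let P be the downward closure of a point in the second barycentric subdivision sd²(X). Then G·P = {g·u : g ∈ G, u ∈ P} is an open, G-categorical subset of sd²(X). -/
/-! ### Module B: finite G-posets (= finite T₀ G-spaces) and barycentric subdivision -/

/-- The down-set (Alexandrov) topology on a preorder: open sets are the downwards-closed
sets.  Under the identification of finite `T₀` spaces with finite posets via the
specialization order, this recovers the topology of the finite space. -/
def downTop (P : Type*) [Preorder P] : TopologicalSpace P where
  IsOpen U := ∀ ⦃a⦄, a ∈ U → ∀ ⦃b⦄, b ≤ a → b ∈ U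
  isOpen_univ := fun a _ b _ => Set.mem_univ b
  isOpen_inter := fun s t hs ht a ha b hba => ⟨hs ha.1 hba, ht ha.2 hba⟩
  isOpen_sUnion := fun S hS a ha b hba => by
    obtain ⟨t, htS, hat⟩ := ha
    exact ⟨t, htS, hS t htS hat hba⟩

/-- A finite `T₀` `G`-space, encoded as a finite poset (via the specialization order)
with an action of `G` by monotone maps (equivalently, by homeomorphisms). -/
structure FinGPoset (G : Type) [Group G] : Type 1 where
  /-- the underlying set of points -/
  carrier : Type
  [fin : Fintype carrier]
  [po : PartialOrder carrier]
  /-- the action of `G` -/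
  smul : G → carrier → carrier
  smul_one : ∀ x, smul 1 x = x
  smul_mul : ∀ g h x, smul (g * h) x = smul g (smul h x)
  smul_mono : ∀ g : G, ∀ x y : carrier, x ≤ y → smul g x ≤ smul g y

attribute [instance] FinGPoset.fin FinGPoset.po

namespace FinGPoset

variable {G : Type} [Group G]

/-- The nonempty chains of a poset. -/
def chains (P : Type) [PartialOrder P] : Type :=
  {c : Finset P // c.Nonempty ∧ ∀ x ∈ c, ∀ y ∈ c, x ≤ y ∨ y ≤ x}

noncomputable instance (P : Type) [PartialOrder P] [Fintype P] : Fintype (chains P) := by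
  classical exact Subtype.fintype _

instance (P : Type) [PartialOrder P] : PartialOrder (chains P) :=
  Subtype.partialOrder _

/-- The barycentric subdivision of a finite `T₀` `G`-space: the poset of nonempty chains,
ordered by inclusion, with the induced `G`-action `g • {p₀ < ⋯ < pₙ} = {g•p₀ < ⋯ < g•pₙ}`. -/
noncomputable def sd (X : FinGPoset G) : FinGPoset G := by
  classical
  exact
  { carrier := chains X.carrier
    smul := fun g c => ⟨c.val.image (X.smul g), c.prop.1.image _, by
      intro x hx y hy
      rcases Finset.mem_image.mp hx with ⟨a, ha, rfl⟩
      rcases Finset.mem_image.mp hy with ⟨b, hb, rfl⟩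
      rcases c.prop.2 a ha b hb with h | h
      · exact Or.inl (X.smul_mono g _ _ h)
      · exact Or.inr (X.smul_mono g _ _ h)⟩
    smul_one := fun c => by
      apply Subtype.ext
      show c.val.image (X.smul 1) = c.val
      rw [Finset.image_congr (g := id) (fun x _ => X.smul_one x), Finset.image_id]
    smul_mul := fun g h c => by
      apply Subtype.ext
      show c.val.image (X.smul (g * h)) = (c.val.image (X.smul h)).image (X.smul g)
      rw [Finset.image_image]
      exact Finset.image_congr (fun x _ => X.smul_mul g h x)
    smul_mono := fun g c d hcd => by
      show c.val.image (X.smul g) ≤ d.val.image (X.smul g)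
      exact Finset.image_subset_image hcd }

/-- Iterated barycentric subdivision. -/
noncomputable def sdIter : ℕ → FinGPoset G → FinGPoset G
  | 0, X => X
  | (n + 1), X => (sdIter n X).sd

/-- The `G`-action on a finite `T₀` `G`-space, as a `MulAction`. -/
def mulAction (X : FinGPoset G) : MulAction G X.carrier where
  smul := X.smul
  one_smul := X.smul_one
  mul_smul := X.smul_mul

/-- The set of points of `X` fixed by every element of the subgroup `H`. -/
def fixedBy (X : FinGPoset G) (H : Subgroup G) : Set X.carrier :=
  {x | ∀ h ∈ H, X.smul h x = x}

/-- The set of points of `X` fixed by every element of `G`. -/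
def fixedSet (X : FinGPoset G) : Set X.carrier :=
  {x | ∀ g : G, X.smul g x = x}

/-- `X` is `G`-connected: for every subgroup `H ≤ G`, the fixed-point set `X^H`
(with the topology of the finite space) is path-connected. -/
def GConnected (X : FinGPoset G) : Prop :=
  letI : TopologicalSpace X.carrier := downTop X.carrier
  ∀ H : Subgroup G, ∀ a ∈ X.fixedBy H, ∀ b ∈ X.fixedBy H, JoinedIn (X.fixedBy H) a b

/-- A subset of a finite `T₀` `G`-space is open iff it is open in the down-set topology. -/
def IsOpenP (X : FinGPoset G) (U : Set X.carrier) : Prop :=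
  letI : TopologicalSpace X.carrier := downTop X.carrier
  IsOpen U

/-- The equivariant topological complexity of a finite `T₀` `G`-space. -/
noncomputable def TCG (X : FinGPoset G) : ℕ∞ :=
  letI : TopologicalSpace X.carrier := downTop X.carrier
  letI : MulAction G X.carrier := X.mulAction
  eqTC G X.carrier

/-- The equivariant Lusternik–Schnirelmann category of a finite `T₀` `G`-space. -/
noncomputable def LSG (X : FinGPoset G) : ℕ∞ :=
  letI : TopologicalSpace X.carrier := downTop X.carrier
  letI : MulAction G X.carrier := X.mulAction
  eqLS G X.carrier

/-- The saturation `G · U` of a subset `U` of a `G`-space. -/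
def satur (X : FinGPoset G) (U : Set X.carrier) : Set X.carrier :=
  {v | ∃ g : G, ∃ u ∈ U, v = X.smul g u}

/-- A subset of a finite `T₀` `G`-space is `G`-categorical: it is invariant and its
inclusion is `G`-homotopic to a map taking values in a single orbit. -/
def GCat (X : FinGPoset G) (U : Set X.carrier) : Prop :=
  letI : TopologicalSpace X.carrier := downTop X.carrier
  letI : MulAction G X.carrier := X.mulAction
  GInvariant G U ∧ GCategorical G X.carrier U

end FinGPoset

/-!
The translates of `P = U_s` may overlap, and everything rests on controlling these overlaps. In
`sd X`, an element of `G` fixing a chain `τ` fixes every chain `σ ≤ τ`, because a monotone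
bijection of a finite poset fixes each point that it moves to a comparable one. In `sd² X`, if
`s` and `g • s` have a common vertex, then that vertex is `g • τ` for some `τ ∈ s` with
`g • τ = τ`, so `g` fixes the least vertex `σ` of `s`. Hence sending every `u ≤ g • s` to `g • {σ}`
is a well-defined map from `G·P` to the orbit of `{σ}`. It is `G`-homotopic to the inclusion via
the fence `u ≤ u ∪ g • {σ} ≥ g • {σ}`.
-/

section Fence

variable {Y Z : Type*}

/-- The homotopy attached to a fence of maps `f ≤ m ≥ r`: it runs from `f` to `r` and takes the
value `m` at time `1 / 2` only. -/
noncomputable def fenceHomotopy (f m r : Y → Z) (p : Y × unitInterval) : Z :=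
  if (p.2 : ℝ) < 1 / 2 then f p.1 else if (p.2 : ℝ) = 1 / 2 then m p.1 else r p.1

theorem fenceHomotopy_zero (f m r : Y → Z) (y : Y) : fenceHomotopy f m r (y, 0) = f y := by
  simp [fenceHomotopy]

theorem fenceHomotopy_one (f m r : Y → Z) (y : Y) : fenceHomotopy f m r (y, 1) = r y := by
  norm_num [fenceHomotopy]

theorem preimage_fenceHomotopy {f m r : Y → Z} {W : Set Z} (hf : m ⁻¹' W ⊆ f ⁻¹' W)
    (hr : m ⁻¹' W ⊆ r ⁻¹' W) :
    fenceHomotopy f m r ⁻¹' W = (f ⁻¹' W) ×ˢ {t : unitInterval | (t : ℝ) < 1 / 2} ∪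
      (m ⁻¹' W) ×ˢ Set.univ ∪ (r ⁻¹' W) ×ˢ {t : unitInterval | 1 / 2 < (t : ℝ)} := by
  ext ⟨y, t⟩
  have hfy : m y ∈ W → f y ∈ W := @hf y
  have hry : m y ∈ W → r y ∈ W := @hr y
  rcases lt_trichotomy (t : ℝ) (1 / 2) with ht | ht | ht
  · simpa [fenceHomotopy, -one_div, ht, ht.not_gt] using hfy
  · simp [fenceHomotopy, ht]
  · simpa [fenceHomotopy, -one_div, ht, ht.not_gt, ht.ne'] using hry

theorem continuous_fenceHomotopy [TopologicalSpace Y] [TopologicalSpace Z] {f m r : Y → Z}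
    (hf : Continuous f) (hm : Continuous m) (hr : Continuous r) (hfm : ∀ y, f y ⤳ m y)
    (hrm : ∀ y, r y ⤳ m y) : Continuous (fenceHomotopy f m r) := by
  refine continuous_def.2 fun W hW ↦ ?_
  rw [preimage_fenceHomotopy (fun y ↦ (hfm y).mem_open hW) (fun y ↦ (hrm y).mem_open hW)]
  have hlt : IsOpen {t : unitInterval | (t : ℝ) < 1 / 2} :=
    isOpen_lt continuous_subtype_val continuous_const
  have hgt : IsOpen {t : unitInterval | 1 / 2 < (t : ℝ)} :=
    isOpen_lt continuous_const continuous_subtype_val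
  exact (((hW.preimage hf).prod hlt).union ((hW.preimage hm).prod isOpen_univ)).union
    ((hW.preimage hr).prod hgt)

end Fence

/-- Equivariance of a map defined on a subset `U` of a `G`-set. As in `GCategoricalAt`, `U` is not
assumed to be invariant. -/
def EquivariantOn (G : Type*) {X : Type*} [SMul G X] (U : Set X) (f : U → X) : Prop :=
  ∀ (g : G) (u : U) (h : g • (u : X) ∈ U), f ⟨g • (u : X), h⟩ = g • f u

theorem gCategorical_of_specializes {G X : Type*} [Group G] [TopologicalSpace X] [MulAction G X]
    {U : Set X} {m r : U → X} {x₀ : X} (hm : Continuous m) (hr : Continuous r)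
    (hm_equiv : EquivariantOn G U m) (hr_equiv : EquivariantOn G U r)
    (hum : ∀ u : U, (u : X) ⤳ m u) (hrm : ∀ u, r u ⤳ m u)
    (hr_orbit : ∀ u, r u ∈ MulAction.orbit G x₀) : GCategorical G X U := by
  refine ⟨x₀, fenceHomotopy Subtype.val m r,
    continuous_fenceHomotopy continuous_subtype_val hm hr hum hrm,
    fenceHomotopy_zero _ _ _, fun g u h t ↦ ?_, fun u ↦ ?_⟩
  · simp only [fenceHomotopy, hm_equiv g u h, hr_equiv g u h]
    split_ifs <;> rfl
  · rw [fenceHomotopy_one]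
    exact hr_orbit u

theorem isLowerSet_downTop (P : Type*) [Preorder P] : @Topology.IsLowerSet P (downTop P) _ :=
  @Topology.IsLowerSet.mk P (downTop P) _ <| TopologicalSpace.ext <| funext fun _ ↦
    propext ⟨fun h _ _ hba ha ↦ h ha hba, fun h _ ha _ hba ↦ h hba ha⟩

instance isLowerSet_subtype {P : Type*} [TopologicalSpace P] [Preorder P] [Topology.IsLowerSet P]
    (U : Set P) : Topology.IsLowerSet U :=
  Topology.isLowerSet_iff_nhds.2 fun a ↦ by
    rw [nhds_subtype, Topology.IsLowerSet.nhds_eq_principal_Iic, Filter.comap_principal]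
    rfl

section PreorderedAction

variable {G P : Type*} [Group G] [Preorder P] [MulAction G P]
  [CovariantClass G P HSMul.hSMul LE.le] {s c : P}

theorem inv_smul_le_of_le_smul {g : G} {a b : P} (h : a ≤ g • b) : g⁻¹ • a ≤ b := by
  simpa only [inv_smul_smul] using smul_mono_right g⁻¹ h

theorem isLUB_image_smul {A : Set P} {j : P} (h : IsLUB A j) (g : G) :
    IsLUB ((g • ·) '' A) (g • j) :=
  ((MulAction.toPerm g).toOrderIso (smul_mono_right g) (smul_mono_right g⁻¹)).isLUB_image'.2 h

theorem smul_eq_smul_of_le_smul (hfix : ∀ (g : G) (u : P), u ≤ s → u ≤ g • s → g • c = c)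
    {g h : G} {u : P} (hg : u ≤ g • s) (hh : u ≤ h • s) : g • c = h • c := by
  have hc : (g⁻¹ * h) • c = c := by
    refine hfix _ (g⁻¹ • u) (inv_smul_le_of_le_smul hg) ?_
    rw [mul_smul]
    exact smul_mono_right g⁻¹ hh
  rwa [mul_smul, inv_smul_eq_iff, eq_comm] at hc

theorem exists_equivariantOn_smul (hfix : ∀ (g : G) (u : P), u ≤ s → u ≤ g • s → g • c = c)
    {U : Set P} (hU : ∀ u ∈ U, ∃ g : G, u ≤ g • s) :
    ∃ r : U → P, Monotone r ∧ EquivariantOn G U r ∧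
      ∀ u : U, ∃ g : G, (u : P) ≤ g • s ∧ r u = g • c := by
  choose γ hγ using fun u : U ↦ hU u u.2
  refine ⟨fun u ↦ γ u • c, fun u v huv ↦ ?_, fun g u h ↦ ?_, fun u ↦ ⟨γ u, hγ u, rfl⟩⟩
  · exact (smul_eq_smul_of_le_smul hfix (hγ u) (le_trans huv (hγ v))).le
  · rw [← mul_smul]
    refine smul_eq_smul_of_le_smul hfix (hγ ⟨g • (u : P), h⟩) ?_
    rw [mul_smul]
    exact smul_mono_right g (hγ u)

end PreorderedAction

section OrderedAction

variable {G P : Type*} [Group G] [PartialOrder P] [MulAction G P]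
  [CovariantClass G P HSMul.hSMul LE.le] [TopologicalSpace P] [Topology.IsLowerSet P]

theorem gCategorical_of_bddAbove_pair {U : Set P} {r : U → P} {x₀ : P}
    (hlub : ∀ a b : P, BddAbove {a, b} → ∃ j, IsLUB {a, b} j)
    (hr : Monotone r) (hr_equiv : EquivariantOn G U r) (hbdd : ∀ u : U, BddAbove {(u : P), r u})
    (hr_orbit : ∀ u, r u ∈ MulAction.orbit G x₀) : GCategorical G P U := by
  choose m hm using fun u : U ↦ hlub u (r u) (hbdd u)
  have hum (u : U) : (u : P) ≤ m u := (hm u).1 (Set.mem_insert _ _)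
  have hrm (u : U) : r u ≤ m u := (hm u).1 (Set.mem_insert_of_mem _ rfl)
  have hm_mono : Monotone m := fun u v huv ↦ (isLUB_le_iff (hm u)).2 <| by
    rintro x (rfl | rfl)
    exacts [le_trans huv (hum v), (hr huv).trans (hrm v)]
  have hm_equiv : EquivariantOn G U m := fun g u h ↦ by
    have hlub_smul := isLUB_image_smul (hm u) g
    rw [Set.image_pair, ← hr_equiv g u h] at hlub_smul
    exact (hm _).unique hlub_smul
  simp only [← Topology.IsLowerSet.specializes_iff_le] at hum hrm
  exact gCategorical_of_specializes (Topology.IsLowerSet.monotone_iff_continuous.1 hm_mono)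
    (Topology.IsLowerSet.monotone_iff_continuous.1 hr) hm_equiv hr_equiv hum hrm hr_orbit

theorem gCategorical_of_le_smul {s c : P} {U : Set P}
    (hlub : ∀ a b : P, BddAbove {a, b} → ∃ j, IsLUB {a, b} j) (hcs : c ≤ s)
    (hfix : ∀ (g : G) (u : P), u ≤ s → u ≤ g • s → g • c = c)
    (hU : ∀ u ∈ U, ∃ g : G, u ≤ g • s) : GCategorical G P U := by
  obtain ⟨r, hr, hr_equiv, hr_smul⟩ := exists_equivariantOn_smul hfix hU
  refine gCategorical_of_bddAbove_pair (x₀ := c) hlub hr hr_equiv (fun u ↦ ?_) fun u ↦ ?_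
  · obtain ⟨g, hug, hrg⟩ := hr_smul u
    refine ⟨g • s, ?_⟩
    rintro x (rfl | rfl)
    exacts [hug, hrg.trans_le (smul_mono_right g hcs)]
  · obtain ⟨g, -, hrg⟩ := hr_smul u
    exact ⟨g, hrg.symm⟩

end OrderedAction

theorem map_eq_self_of_monotone_of_injective {P : Type*} [PartialOrder P] [Finite P]
    {f : P → P} (hf : Monotone f) (hinj : Function.Injective f) {x : P}
    (h : f x ≤ x ∨ x ≤ f x) : f x = x := by
  obtain ⟨n, hn, hx⟩ := hinj.mem_periodicPts x
  have hn : 1 ≤ n := hn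
  rcases h with h | h
  · exact h.antisymm (hx.eq.ge.trans (hf.antitone_iterate_of_map_le h hn))
  · exact ((hf.monotone_iterate_of_le_map h hn).trans hx.eq.le).antisymm h

namespace FinGPoset

namespace chains

variable {P : Type} [PartialOrder P]

/-- The chain consisting of a single point `x`, regarded as a vertex of the subdivision. -/
def vertex (x : P) : chains P :=
  ⟨{x}, Finset.singleton_nonempty x, by simp⟩

theorem vertex_le_iff {x : P} {c : chains P} : vertex x ≤ c ↔ x ∈ c.val :=
  Finset.singleton_subset_iff

theorem exists_least (c : chains P) : ∃ x ∈ c.val, ∀ y ∈ c.val, x ≤ y := by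
  obtain ⟨x, hx, hmin⟩ := Finset.exists_minimal c.prop.1
  exact ⟨x, hx, fun y hy ↦ (c.prop.2 x hx y hy).elim id (hmin hy)⟩

theorem exists_isLUB_pair (a b : chains P) (h : BddAbove {a, b}) : ∃ j, IsLUB {a, b} j := by
  classical
  obtain ⟨t, ht⟩ := h
  have hsub : a.val ∪ b.val ⊆ t.val :=
    Finset.union_subset (ht (Set.mem_insert _ _)) (ht (Set.mem_insert_of_mem _ rfl))
  refine ⟨⟨a.val ∪ b.val, a.prop.1.mono Finset.subset_union_left,
    fun x hx y hy ↦ t.prop.2 x (hsub hx) y (hsub hy)⟩, ?_, fun d hd ↦ ?_⟩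
  · rintro x (rfl | rfl)
    exacts [Finset.subset_union_left (s₁ := x.val), Finset.subset_union_right (s₂ := x.val)]
  · exact Finset.union_subset (hd (Set.mem_insert _ _)) (hd (Set.mem_insert_of_mem _ rfl))

end chains

variable {G : Type} [Group G] (X : FinGPoset G)

theorem inv_smul_smul (g : G) (x : X.carrier) : X.smul g⁻¹ (X.smul g x) = x := by
  rw [← X.smul_mul, inv_mul_cancel, X.smul_one]

theorem smul_eq_of_le_or_le {g : G} {x : X.carrier} (h : X.smul g x ≤ x ∨ x ≤ X.smul g x) :
    X.smul g x = x :=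
  map_eq_self_of_monotone_of_injective (X.smul_mono g)
    (Function.LeftInverse.injective (X.inv_smul_smul g)) h

theorem mem_sd_smul {g : G} {c : X.sd.carrier} {y : X.carrier} :
    y ∈ (X.sd.smul g c).val ↔ ∃ x ∈ c.val, X.smul g x = y := by
  classical
  exact Finset.mem_image

theorem sd_smul_vertex (g : G) (x : X.carrier) :
    X.sd.smul g (chains.vertex x) = chains.vertex (X.smul g x) := by
  classical
  exact Subtype.ext (Finset.image_singleton _ _)

theorem smul_eq_of_mem_of_sd_smul_eq {g : G} {τ : X.sd.carrier} (hτ : X.sd.smul g τ = τ)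
    {x : X.carrier} (hx : x ∈ τ.val) : X.smul g x = x := by
  have hgx : X.smul g x ∈ τ.val := hτ ▸ X.mem_sd_smul.2 ⟨x, hx, rfl⟩
  exact X.smul_eq_of_le_or_le (τ.prop.2 _ hgx _ hx)

theorem sd_smul_eq_of_le {g : G} {σ τ : X.sd.carrier} (hστ : σ ≤ τ) (hτ : X.sd.smul g τ = τ) :
    X.sd.smul g σ = σ := by
  classical
  have hfix : ∀ x ∈ σ.val, X.smul g x = x :=
    fun x hx ↦ X.smul_eq_of_mem_of_sd_smul_eq hτ (hστ hx)
  exact Subtype.ext ((Finset.image_congr hfix).trans Finset.image_id)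

theorem exists_mem_smul_eq_of_le {s u : X.sd.carrier} {g : G} (hu : u ≤ s)
    (hug : u ≤ X.sd.smul g s) : ∃ x ∈ s.val, X.smul g x = x := by
  obtain ⟨y, hy⟩ := u.prop.1
  obtain ⟨x, hx, rfl⟩ := X.mem_sd_smul.1 (hug hy)
  exact ⟨x, hx, X.smul_eq_of_le_or_le (s.prop.2 _ (hu hy) _ hx)⟩

section Saturation

variable {X}

theorem isOpenP_satur {U : Set X.carrier} (hU : X.IsOpenP U) : X.IsOpenP (X.satur U) := by
  rintro _ ⟨g, u, hu, rfl⟩ b hb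
  refine ⟨g, X.smul g⁻¹ b, hU hu ?_, ?_⟩
  · simpa only [X.inv_smul_smul] using X.smul_mono g⁻¹ _ _ hb
  · simpa only [inv_inv] using (X.inv_smul_smul g⁻¹ b).symm

theorem gCat_satur_of_le {s c : X.carrier}
    (hlub : ∀ a b : X.carrier, BddAbove {a, b} → ∃ j, IsLUB {a, b} j) (hcs : c ≤ s)
    (hfix : ∀ (g : G) (u : X.carrier), u ≤ s → u ≤ X.smul g s → X.smul g c = c) :
    X.GCat (X.satur {u | u ≤ s}) := by
  let : TopologicalSpace X.carrier := downTop X.carrier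
  let : MulAction G X.carrier := X.mulAction
  have : Topology.IsLowerSet X.carrier := isLowerSet_downTop X.carrier
  have : CovariantClass G X.carrier HSMul.hSMul LE.le := ⟨fun g _ _ h ↦ X.smul_mono g _ _ h⟩
  constructor
  · rintro g _ ⟨h, u, hu, rfl⟩
    exact ⟨g * h, u, hu, (X.smul_mul g h u).symm⟩
  · refine gCategorical_of_le_smul hlub hcs hfix ?_
    rintro _ ⟨g, u, hu, rfl⟩
    exact ⟨g, X.smul_mono g _ _ hu⟩

end Saturation

end FinGPoset

open FinGPoset in
theorem satur_downClosure_isOpen_gcat_general {G : Type} [Group G] (X : FinGPoset G)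
    (s : (sdIter 2 X).carrier) :
    (sdIter 2 X).IsOpenP ((sdIter 2 X).satur {u | u ≤ s}) ∧
      (sdIter 2 X).GCat ((sdIter 2 X).satur {u | u ≤ s}) := by
  refine ⟨isOpenP_satur fun _ ha _ hb ↦ le_trans hb ha, ?_⟩
  obtain ⟨σ, hσ, hleast⟩ := chains.exists_least s
  refine gCat_satur_of_le (c := chains.vertex σ) chains.exists_isLUB_pair
    (chains.vertex_le_iff.2 hσ) fun g u hus hugs ↦ ?_
  obtain ⟨τ, hτ, hgτ⟩ := X.sd.exists_mem_smul_eq_of_le hus hugs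
  have hgσ : X.sd.smul g σ = σ := X.sd_smul_eq_of_le (hleast τ hτ) hgτ
  exact (X.sd.sd_smul_vertex g σ).trans (congrArg chains.vertex hgσ)

/-- Let `G` be a finite group, `X` a finite `T₀` `G`-space, and `P` the
downward closure of a point `s` in the second barycentric subdivision `sd²(X)`. Then
`G·P = {g • u : g ∈ G, u ∈ P}` is an open, `G`-categorical subset of `sd²(X)`. -/
theorem satur_downClosure_isOpen_gcat (G : Type) [Group G] [Finite G] (X : FinGPoset G)
    (s : (FinGPoset.sdIter 2 X).carrier) :
    (FinGPoset.sdIter 2 X).IsOpenP ((FinGPoset.sdIter 2 X).satur {u | u ≤ s}) ∧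
      (FinGPoset.sdIter 2 X).GCat ((FinGPoset.sdIter 2 X).satur {u | u ≤ s}) :=
  satur_downClosure_isOpen_gcat_general X s
end

section
/- Let X be a path-connected finite topological space with n = #X points, and let x, y ∈ X. Then there is a combinatorial path of length n from x to y, i.e. a continuous map α: J_n → X with α(0) = x and α(n) = y. -/
/-! A combinatorial path may stay put at any step, so the sets `R k` of points reachable from `x`
in `k` steps increase with `k`. If `R (k + 2) = R (k + 1)`, then `R (k + 1)` absorbs steps of both
parities, so it is stable under specialization and generalization, hence clopen, hence all of `X`.
Therefore `R 1 ⊂ R 2 ⊂ ⋯` grows strictly until it exhausts the space, and `k ≤ #R k` until then.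
The comparison starts at `R 1` because the first step only goes up: if `x` is maximal, then
`R 1 = R 0 = {x}`. -/

section Zigzag

variable {X : Type*} [TopologicalSpace X]

/-- The order relation required between consecutive values `a = a_i` and `b = a_{i+1}` of a
combinatorial path. As open sets are down-closed, `a ⤳ b` is `a ≤ b` in the specialization order
(Mathlib's `specializationPreorder` is the opposite one). -/
def ZigzagStep (i : ℕ) (a b : X) : Prop :=
  if Even i then a ⤳ b else b ⤳ a

/-- The set of endpoints of combinatorial paths of length `k` starting at `x`, built one step at a
time. -/
def zigzagReach (x : X) : ℕ → Set X
  | 0 => {x}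
  | k + 1 => {z | ∃ w ∈ zigzagReach x k, ZigzagStep k w z}

namespace ZigzagStep

variable {i : ℕ} {a b c : X}

theorem refl (i : ℕ) (a : X) : ZigzagStep i a a := by
  simp [ZigzagStep, specializes_rfl]

theorem trans (hab : ZigzagStep i a b) (hbc : ZigzagStep i b c) : ZigzagStep i a c := by
  unfold ZigzagStep at *
  split_ifs at *
  · exact hab.trans hbc
  · exact hbc.trans hab

theorem succ_iff : ZigzagStep (i + 1) a b ↔ ZigzagStep i b a := by
  by_cases hi : Even i <;> simp [ZigzagStep, Nat.even_add_one, hi]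

theorem or_swap_of_specializes (i : ℕ) (h : a ⤳ b) : ZigzagStep i a b ∨ ZigzagStep i b a := by
  by_cases hi : Even i <;> simp [ZigzagStep, hi, h]

end ZigzagStep

theorem isClopen_of_forall_zigzagStep_mem [AlexandrovDiscrete X] {s : Set X} (i : ℕ)
    (hi : ∀ a ∈ s, ∀ b, ZigzagStep i a b → b ∈ s)
    (hi_succ : ∀ a ∈ s, ∀ b, ZigzagStep (i + 1) a b → b ∈ s) : IsClopen s := by
  simp only [ZigzagStep.succ_iff] at hi_succ
  have specialization : StableUnderSpecialization s := fun a b hab ha =>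
    (ZigzagStep.or_swap_of_specializes i hab).elim (hi a ha b) (hi_succ a ha b)
  have generalization : StableUnderGeneralization s := fun a b hba ha =>
    (ZigzagStep.or_swap_of_specializes i hba).elim (hi_succ a ha b) (hi a ha b)
  refine ⟨?_, isOpen_iff_forall_specializes.2 fun _ _ hab => generalization hab⟩
  rw [← isOpen_compl_iff, isOpen_iff_forall_specializes]
  exact fun _ _ hab => mt (specialization hab)

theorem zigzagReach_subset_succ (x : X) (k : ℕ) : zigzagReach x k ⊆ zigzagReach x (k + 1) :=
  fun z hz => ⟨z, hz, ZigzagStep.refl k z⟩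

theorem self_mem_zigzagReach (x : X) (k : ℕ) : x ∈ zigzagReach x k :=
  monotone_nat_of_le_succ (zigzagReach_subset_succ x) k.zero_le rfl

theorem zigzagReach_succ_eq_univ [AlexandrovDiscrete X] [PreconnectedSpace X] {x : X} {k : ℕ}
    (h : zigzagReach x (k + 2) ⊆ zigzagReach x (k + 1)) : zigzagReach x (k + 1) = Set.univ := by
  have clopen : IsClopen (zigzagReach x (k + 1)) := by
    refine isClopen_of_forall_zigzagStep_mem k ?_ fun w hw z hwz => h ⟨w, hw, hwz⟩
    rintro w ⟨v, hv, hvw⟩ z hwz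
    exact ⟨v, hv, hvw.trans hwz⟩
  exact clopen.eq_univ ⟨x, self_mem_zigzagReach x (k + 1)⟩

theorem zigzagReach_ssubset_succ [AlexandrovDiscrete X] [PreconnectedSpace X] {x : X} {k : ℕ}
    (h : zigzagReach x (k + 1) ≠ Set.univ) : zigzagReach x (k + 1) ⊂ zigzagReach x (k + 2) :=
  (zigzagReach_subset_succ x (k + 1)).ssubset_of_not_subset (mt zigzagReach_succ_eq_univ h)

theorem le_encard_zigzagReach [AlexandrovDiscrete X] [PreconnectedSpace X] {x : X} {k : ℕ}
    (h : zigzagReach x k ≠ Set.univ) : k ≤ (zigzagReach x k).encard := by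
  induction k with
  | zero => simp
  | succ k ih =>
    cases k with
    | zero => simpa using ⟨x, self_mem_zigzagReach x 1⟩
    | succ k =>
      have h_prev : zigzagReach x (k + 1) ≠ Set.univ := fun h_univ =>
        h (Set.univ_subset_iff.1 (h_univ ▸ zigzagReach_subset_succ x (k + 1)))
      rcases (zigzagReach x (k + 2)).finite_or_infinite with hfin | hinf
      · have hlt := (hfin.subset (zigzagReach_subset_succ x (k + 1))).encard_lt_encard
          (zigzagReach_ssubset_succ h_prev)
        exact_mod_cast Order.add_one_le_of_lt ((ih h_prev).trans_lt hlt)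
      · simp [hinf.encard_eq]

theorem zigzagReach_eq_univ_of_card_le [Finite X] [PreconnectedSpace X] (x : X) {k : ℕ}
    (hk : Nat.card X ≤ k) : zigzagReach x k = Set.univ := by
  by_contra h
  have hlt : (zigzagReach x k).encard < Nat.card X :=
    ENat.card_eq_coe_natCard X ▸ (Set.toFinite _).encard_lt_card h
  exact (le_encard_zigzagReach h).not_gt (hlt.trans_le (mod_cast hk))

theorem exists_zigzag_of_mem_zigzagReach {x z : X} {k : ℕ} (hz : z ∈ zigzagReach x k) :
    ∃ f : ℕ → X, f 0 = x ∧ f k = z ∧ ∀ i < k, ZigzagStep i (f i) (f (i + 1)) := by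
  induction k generalizing z with
  | zero => exact ⟨fun _ => x, rfl, hz.symm, by simp⟩
  | succ k ih =>
    obtain ⟨w, hw, hwz⟩ := hz
    obtain ⟨f, hf_zero, rfl, hf⟩ := ih hw
    refine ⟨Function.update f (k + 1) z, by simp [hf_zero], by simp, fun i hi => ?_⟩
    rcases Nat.lt_succ_iff_lt_or_eq.1 hi with hik | rfl
    · simpa [hi.ne, hik.ne] using hf i hik
    · simpa using hwz

namespace J

variable {m : ℕ}

theorem val_le (i : J m) : i.val ≤ m :=
  Fin.is_le i

theorem continuous_of_forall_specializes {f : J m → X}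
    (hf : ∀ i j, zigzagLE i.val j.val → f i ⤳ f j) : Continuous f :=
  ⟨fun _ hU j hj i hij => (hf i j hij).mem_open hU hj⟩

theorem continuous_comp_val {f : ℕ → X} (hf : ∀ i < m, ZigzagStep i (f i) (f (i + 1))) :
    Continuous fun i : J m => f i.val := by
  refine continuous_of_forall_specializes fun i j hij => ?_
  obtain h | ⟨hi, h | h⟩ := hij
  · rw [h]
  · have step := hf i.val (by have := j.val_le; omega)
    rwa [ZigzagStep, if_pos (Nat.even_iff.2 hi), ← h] at step
  · have step := hf j.val (by have := i.val_le; omega)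
    rwa [ZigzagStep, if_neg (Nat.even_add_one.1 (h ▸ Nat.even_iff.2 hi)), ← h] at step

end J

theorem exists_combinatorial_path_general [Finite X] [PreconnectedSpace X] {m : ℕ}
    (hm : Nat.card X ≤ m) (x y : X) : ∃ α : C(J m, X), α (J.zero m) = x ∧ α (J.last m) = y := by
  have hy : y ∈ zigzagReach x m := zigzagReach_eq_univ_of_card_le x hm ▸ Set.mem_univ y
  obtain ⟨f, hf_zero, hf_last, hf⟩ := exists_zigzag_of_mem_zigzagReach hy
  exact ⟨⟨fun i => f i.val, J.continuous_comp_val hf⟩, hf_zero, hf_last⟩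

end Zigzag

/-- Let `X` be a path-connected finite topological space with `n = #X`
points. Then any two points `x, y ∈ X` are joined by a combinatorial path of length `n`,
i.e. a continuous map `α : J n → X` with `α 0 = x` and `α n = y`. -/
theorem exists_combinatorial_path (X : Type*) [TopologicalSpace X] [Finite X]
    [PathConnectedSpace X] (x y : X) :
    ∃ α : C(J (Nat.card X), X), α (J.zero (Nat.card X)) = x ∧ α (J.last (Nat.card X)) = y :=
  exists_combinatorial_path_general le_rfl x y
end
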